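/- Let ε ≥ 2^{−2^{n−1}}. For every leader's decision x = (x₁, x₂) in the box [x̲₁, x̄₁] × [x̲₂, x̄₂], the maximum of f(x, ·) over Ω_ε(x) equals 1/2, and the set of maximizers is exactly { y ∈ Ω_ε(x) : y_n = 0 }, which is nonempty. -/

import Mathlib

/-!
On `Ω_ε(x)` both `yₙ` and the bracket `x₁ + x₂ − y_{n+1} − y_{n+2}` are nonnegative, so
`f(x, y) ≤ y₁ = 1/2 − yₙ ≤ 1/2`, with equality exactly when `yₙ = 0`. The bound is attained because
`yᵢ = 2^(−2^(i−1))` for `i < n`, completed by zeros, satisfies the first `n − 2` quadratic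
constraints exactly and violates the last one, `y_{n−1}² ≤ yₙ`, by `2^(−2^(n−1)) ≤ ε`.
-/

/-- The set `Ω_ε(x)` of ε-feasible points: all linear constraints of `Ω(x)`
hold exactly and each quadratic constraint may be violated by at most `ε`. -/
def OmegaEps (n : ℕ) (x1 x2 ε : ℝ) : Set (Fin (n + 2) → ℝ) :=
  {y | y ⟨0, by omega⟩ + y ⟨n - 1, by omega⟩ = 1 / 2 ∧
    (∀ i : ℕ, ∀ _h1 : 1 ≤ i, ∀ _h2 : i ≤ n - 1,
      (y ⟨i - 1, by omega⟩) ^ 2 ≤ y ⟨i, by omega⟩ + ε) ∧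
    (∀ i : ℕ, ∀ _h1 : 1 ≤ i, ∀ _h2 : i ≤ n, 0 ≤ y ⟨i - 1, by omega⟩) ∧
    0 ≤ y ⟨n, by omega⟩ ∧ y ⟨n, by omega⟩ ≤ x1 ∧
    -x2 ≤ y ⟨n + 1, by omega⟩ ∧ y ⟨n + 1, by omega⟩ ≤ x2}

/-- The follower's objective `f(x, y) = y₁ − yₙ (x₁ + x₂ − y_{n+1} − y_{n+2})`. -/
noncomputable def follower (n : ℕ) (x1 x2 : ℝ) (y : Fin (n + 2) → ℝ) : ℝ :=
  y ⟨0, by omega⟩ -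
    y ⟨n - 1, by omega⟩ * (x1 + x2 - y ⟨n, by omega⟩ - y ⟨n + 1, by omega⟩)

/-- The set of maximizers of the follower's objective over `Ω_ε(x)`. -/
def SEps (n : ℕ) (x1 x2 ε : ℝ) : Set (Fin (n + 2) → ℝ) :=
  {y | y ∈ OmegaEps n x1 x2 ε ∧
    ∀ y' ∈ OmegaEps n x1 x2 ε, follower n x1 x2 y' ≤ follower n x1 x2 y}

theorem last_lt (n : ℕ) : n - 1 < n + 2 := by omega

/-- The bracket in `f` is nonnegative on `Ω_ε(x)`, so the penalty term only lowers `f` below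
`y₁ = 1/2 − yₙ`. -/
theorem follower_le {n : ℕ} (hn : 2 ≤ n) {x1 x2 ε : ℝ} {y : Fin (n + 2) → ℝ}
    (hy : y ∈ OmegaEps n x1 x2 ε) :
    follower n x1 x2 y ≤ 1 / 2 - y ⟨n - 1, last_lt n⟩ := by
  obtain ⟨h1, -, h3, -, h5, -, h7⟩ := hy
  have h := mul_nonneg (h3 n (by lia) le_rfl)
    (by linarith : 0 ≤ x1 + x2 - y ⟨n, _⟩ - y ⟨n + 1, _⟩)
  unfold follower
  linarith

theorem follower_eq_half {n : ℕ} {x1 x2 ε : ℝ} {y : Fin (n + 2) → ℝ}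
    (hy : y ∈ OmegaEps n x1 x2 ε) (h0 : y ⟨n - 1, last_lt n⟩ = 0) :
    follower n x1 x2 y = 1 / 2 := by
  have h1 := hy.1
  unfold follower
  rw [h0] at h1 ⊢
  linarith

theorem exists_mem_omegaEps_last_eq_zero {n : ℕ} (hn : 2 ≤ n) {x1 x2 ε : ℝ}
    (hx1 : 0 ≤ x1) (hx2 : 0 ≤ x2) (hε : 1 / 2 ^ 2 ^ (n - 1) ≤ ε) :
    ∃ y ∈ OmegaEps n x1 x2 ε, y ⟨n - 1, last_lt n⟩ = 0 := by
  have hε0 : 0 ≤ ε := le_trans (by positivity) hε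
  -- Zero-based indices: coordinate `j < n - 1` is `2^(-2^j)`, and coordinates `n - 1`, `n`, `n + 1`
  -- are `0`. The coordinate `0` equals `1/2` because `n ≥ 2`.
  refine ⟨fun j => if j.val < n - 1 then (1 / 2 : ℝ) ^ 2 ^ j.val else 0,
    ⟨?_, ?_, ?_, ?_, ?_, ?_, ?_⟩, ?_⟩
  · simp [show 0 < n - 1 by omega]
  · intro i hi1 hi2
    obtain ⟨k, rfl⟩ : ∃ k, i = k + 1 := ⟨i - 1, by omega⟩
    have hsq : ((1 / 2 : ℝ) ^ 2 ^ k) ^ 2 = (1 / 2) ^ 2 ^ (k + 1) := by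
      rw [← pow_mul, ← pow_succ]
    simp only [Nat.add_sub_cancel, if_pos (show k < n - 1 by omega), hsq]
    split_ifs with h
    · linarith
    -- `k = n - 2` is the last quadratic constraint, the only one that uses the slack `ε`.
    · obtain rfl : n = k + 2 := by omega
      rw [one_div_pow, zero_add]
      exact hε
  · intro i _ _
    dsimp only
    split_ifs <;> positivity
  all_goals simp [hx1, hx2, show ¬ n < n - 1 by omega, show ¬ n + 1 < n - 1 by omega]

/-- Let `ε ≥ 2^(−2^(n−1))`. For every leader's decision `x` in the box, the
maximum of `f(x, ·)` over `Ω_ε(x)` equals `1/2`, and the set of maximizers is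
exactly `{y ∈ Ω_ε(x) : yₙ = 0}`, which is nonempty. -/
theorem stmt10 (n : ℕ) (hn : 2 ≤ n)
    (xl1 xl2 xu1 xu2 : ℝ) (hl1 : 1 ≤ xl1) (hl2 : 1 ≤ xl2)
    (hu1 : xl1 < xu1) (hu2 : xl2 < xu2)
    (x1 x2 : ℝ) (hx1 : x1 ∈ Set.Icc xl1 xu1) (hx2 : x2 ∈ Set.Icc xl2 xu2)
    (ε : ℝ) (hε : 1 / 2 ^ 2 ^ (n - 1) ≤ ε) :
    (∀ y ∈ SEps n x1 x2 ε, follower n x1 x2 y = 1 / 2) ∧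
    SEps n x1 x2 ε =
      {y | y ∈ OmegaEps n x1 x2 ε ∧ y ⟨n - 1, by omega⟩ = 0} ∧
    (SEps n x1 x2 ε).Nonempty := by
  have hx1' : 0 ≤ x1 := by linarith [hx1.1]
  have hx2' : 0 ≤ x2 := by linarith [hx2.1]
  obtain ⟨z, hz, hz0⟩ := exists_mem_omegaEps_last_eq_zero hn hx1' hx2' hε
  have key : SEps n x1 x2 ε = {y | y ∈ OmegaEps n x1 x2 ε ∧ y ⟨n - 1, last_lt n⟩ = 0} := by
    ext y
    constructor
    · rintro ⟨hy, hmax⟩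
      have hge := hmax z hz
      rw [follower_eq_half hz hz0] at hge
      have hle := follower_le hn hy
      exact ⟨hy, le_antisymm (by linarith) (hy.2.2.1 n (by omega) le_rfl)⟩
    · rintro ⟨hy, hy0⟩
      refine ⟨hy, fun y' hy' => ?_⟩
      rw [follower_eq_half hy hy0]
      linarith [follower_le hn hy', hy'.2.2.1 n (by omega) le_rfl]
  refine ⟨fun y hy => ?_, key, z, ?_⟩
  · rw [key] at hy
    exact follower_eq_half hy.1 hy.2
  · rw [key]
    exact ⟨hz, hz0⟩
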